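/- Parabolic trace theorem (lateral trace): for r > 1/2 and s ≥ 0, and any integer j with 0 ≤ j < r − 1/2, the map φ(t,x',x_m) ↦ (∂^j φ/∂x_m^j)(t,x',0) from D(ℝ^{m+1}) to D(ℝ^m) extends by density to a bounded linear operator from H^{r,s}(ℝ_t × ℝ^m_x) to H^{μ_j,ν_j}(ℝ_t × ℝ^{m−1}), where μ_j = r − j − 1/2 and ν_j = s(1 − j/r − 1/(2r)). -/

import Mathlib

/-!
Write `η = (τ, ξ')` for the frequencies on the hyperplane and `ζ` for the frequency dual to the
last coordinate. Fourier inversion gives, for the trace `g` of `∂_m^j φ`,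
`ĝ(η) = ∫ (2πiζ)^j φ̂(η, ζ) dζ` (`fourier_trace`). With `W(η, ζ)` the weight of `H^{r,s}`,
Cauchy–Schwarz yields `|ĝ(η)|² ≤ (∫ |2πζ|^{2j} / W dζ) (∫ W |φ̂|² dζ)`.
Put `A = (1+τ²)^s + (1+|ξ'|²)^r`, so that `A + |ζ|^{2r} ≤ 2W`. The substitution
`ζ = A^{1/(2r)} w` (`lintegral_weight`) shows that the first factor is at most a constant times
`A^{-θ}`, where `θ = 1 - j/r - 1/(2r)`; the condition `j < r - 1/2` makes the resulting integral
`∫ |w|^{2j} / (1+|w|^{2r}) dw` converge. As `μ_j = rθ` and `ν_j = sθ`, the weight of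
`H^{μ_j,ν_j}` is at most `2 A^θ`, which cancels `A^{-θ}` (`fibre_estimate`); integrating over `η`
finishes the argument.
-/

open MeasureTheory Set Filter Topology
open scoped ENNReal NNReal

noncomputable section

/-- The Fourier transform on `ℝ^k`:
`(𝓕 u)(ξ) = ∫ e^{-2πi x·ξ} u(x) dx`. -/
def FT (k : ℕ) (u : EuclideanSpace ℝ (Fin k) → ℂ) (ξ : EuclideanSpace ℝ (Fin k)) : ℂ :=
  ∫ x : EuclideanSpace ℝ (Fin k),
    Complex.exp (Complex.I * ((-2 * Real.pi * ∑ i, x i * ξ i : ℝ) : ℂ)) * u x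

/-- Squared anisotropic Sobolev norm of
`H^{r,s}(ℝ_t × ℝ^k_x) = L²(ℝ;H^r(ℝ^k)) ∩ H^s(ℝ;L²(ℝ^k))`, defined via the Fourier
transform `û(τ,ξ)`:
`‖u‖² = ∫ [(1+τ²)^s + (1+|ξ|²)^r] |û(τ,ξ)|² dτ dξ`.
Here coordinate `0` is the time variable `τ` and coordinates `1,…,k` are the spatial
frequencies `ξ`. -/
def HrsSq (k : ℕ) (r s : ℝ) (u : EuclideanSpace ℝ (Fin (k + 1)) → ℂ) : ℝ≥0∞ :=
  ∫⁻ ξ : EuclideanSpace ℝ (Fin (k + 1)),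
    ENNReal.ofReal ((1 + (ξ 0) ^ 2) ^ s + (1 + ∑ i : Fin k, (ξ i.succ) ^ 2) ^ r)
      * (‖FT (k + 1) u ξ‖₊ : ℝ≥0∞) ^ 2

/-- Squared (isotropic) fractional Sobolev norm of `H^σ(ℝ^k)` via the Fourier
transform: `‖u‖² = ∫ (1+|ξ|²)^σ |û(ξ)|² dξ`. -/
def HisoSq (k : ℕ) (σ : ℝ) (u : EuclideanSpace ℝ (Fin k) → ℂ) : ℝ≥0∞ :=
  ∫⁻ ξ : EuclideanSpace ℝ (Fin k),
    ENNReal.ofReal ((1 + ∑ i, (ξ i) ^ 2) ^ σ) * (‖FT k u ξ‖₊ : ℝ≥0∞) ^ 2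

/-- The embedding `ℝ_t × ℝ^{n}_{x'} → ℝ_t × ℝ^{n+1}_x`, `(t,x') ↦ (t,x',0)` (the last
spatial coordinate is set to `0`).  Coordinate `0` is time. -/
def hyperplaneEmbed (n : ℕ) (y : EuclideanSpace ℝ (Fin (n + 1))) :
    EuclideanSpace ℝ (Fin (n + 2)) :=
  (EuclideanSpace.equiv (Fin (n + 2)) ℝ).symm
    (fun i => if h : (i : ℕ) < n + 1 then y ⟨i, h⟩ else 0)

section LateralTrace

open scoped FourierTransform LineDeriv

/-! ### Splitting off the last coordinate -/

/-- The point `(y, z)` of `ℝ^k × ℝ ≃ ℝ^{k+1}`, the scalar `z` being the last coordinate. -/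
def snocPt {k : ℕ} (y : EuclideanSpace ℝ (Fin k)) (z : ℝ) : EuclideanSpace ℝ (Fin (k + 1)) :=
  WithLp.toLp 2 (Fin.snoc (α := fun _ => ℝ) y.ofLp z)

@[simp] lemma snocPt_castSucc {k : ℕ} (y : EuclideanSpace ℝ (Fin k)) (z : ℝ) (i : Fin k) :
    snocPt y z i.castSucc = y i := by
  simp [snocPt]

@[simp] lemma snocPt_last {k : ℕ} (y : EuclideanSpace ℝ (Fin k)) (z : ℝ) :
    snocPt y z (Fin.last k) = z := by
  simp [snocPt]

lemma hyperplaneEmbed_eq (n : ℕ) (y : EuclideanSpace ℝ (Fin (n + 1))) :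
    hyperplaneEmbed n y = snocPt y 0 := by
  ext i
  refine Fin.lastCases ?_ (fun i => ?_) i
  · simp [hyperplaneEmbed]
  · rw [snocPt_castSucc]
    simp [hyperplaneEmbed, Nat.lt_succ_iff.1 i.isLt |>.not_gt]

lemma continuous_snocPt {k : ℕ} :
    Continuous fun p : EuclideanSpace ℝ (Fin k) × ℝ => snocPt p.1 p.2 := by
  refine (PiLp.continuous_toLp 2 _).comp (continuous_pi fun i => ?_)
  refine Fin.lastCases ?_ (fun i => ?_) i
  · simpa using continuous_snd
  · simp only [Fin.snoc_castSucc]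
    fun_prop

lemma norm_sq_snocPt {k : ℕ} (y : EuclideanSpace ℝ (Fin k)) (z : ℝ) :
    ‖snocPt y z‖ ^ 2 = ‖y‖ ^ 2 + z ^ 2 := by
  simp [EuclideanSpace.norm_sq_eq, Fin.sum_univ_castSucc]

lemma norm_le_norm_snocPt_left {k : ℕ} (y : EuclideanSpace ℝ (Fin k)) (z : ℝ) :
    ‖y‖ ≤ ‖snocPt y z‖ := by
  refine (sq_le_sq₀ (norm_nonneg _) (norm_nonneg _)).1 ?_
  nlinarith [norm_sq_snocPt y z]

lemma norm_le_norm_snocPt_right {k : ℕ} (y : EuclideanSpace ℝ (Fin k)) (z : ℝ) :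
    ‖z‖ ≤ ‖snocPt y z‖ := by
  refine (sq_le_sq₀ (norm_nonneg _) (norm_nonneg _)).1 ?_
  rw [norm_sq_snocPt, Real.norm_eq_abs, sq_abs]
  nlinarith [sq_nonneg ‖y‖]

lemma inner_snocPt {k : ℕ} (y y' : EuclideanSpace ℝ (Fin k)) (z z' : ℝ) :
    inner ℝ (snocPt y z) (snocPt y' z') = inner ℝ y y' + z * z' := by
  simp [PiLp.inner_apply, Fin.sum_univ_castSucc, mul_comm]

/-- The measurable equivalence `ℝ^k × ℝ ≃ ℝ^{k+1}` given by `snocPt`. -/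
def snocEquiv (k : ℕ) : EuclideanSpace ℝ (Fin k) × ℝ ≃ᵐ EuclideanSpace ℝ (Fin (k + 1)) :=
  MeasurableEquiv.prodComm.trans <|
    ((MeasurableEquiv.refl ℝ).prodCongr (MeasurableEquiv.toLp 2 (Fin k → ℝ)).symm).trans <|
      (MeasurableEquiv.piFinSuccAbove (fun _ => ℝ) (Fin.last k)).symm.trans
        (MeasurableEquiv.toLp 2 (Fin (k + 1) → ℝ))

lemma snocEquiv_apply {k : ℕ} (p : EuclideanSpace ℝ (Fin k) × ℝ) :
    snocEquiv k p = snocPt p.1 p.2 := by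
  ext i
  refine Fin.lastCases ?_ (fun i => ?_) i
  · simp [snocEquiv, snocPt, MeasurableEquiv.prodCongr, MeasurableEquiv.prodComm]
  · simp [snocEquiv, snocPt, MeasurableEquiv.prodCongr, MeasurableEquiv.prodComm]

lemma measurePreserving_snocEquiv (k : ℕ) :
    MeasurePreserving (snocEquiv k) (volume.prod volume) volume := by
  have h1 : MeasurePreserving (MeasurableEquiv.prodComm (α := EuclideanSpace ℝ (Fin k)) (β := ℝ))
      (volume.prod volume) (volume.prod volume) := Measure.measurePreserving_swap
  have h2 : MeasurePreserving
      ((MeasurableEquiv.refl ℝ).prodCongr (MeasurableEquiv.toLp 2 (Fin k → ℝ)).symm)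
      (volume.prod volume) (volume.prod volume) :=
    (MeasurePreserving.id volume).prod (PiLp.volume_preserving_ofLp (Fin k))
  have h3 := (volume_preserving_piFinSuccAbove (fun _ : Fin (k + 1) => ℝ) (Fin.last k)).symm
  exact ((PiLp.volume_preserving_toLp (Fin (k + 1))).comp h3).comp (h2.comp h1)

lemma lintegral_snocPt {k : ℕ} {f : EuclideanSpace ℝ (Fin (k + 1)) → ℝ≥0∞} (hf : Measurable f) :
    ∫⁻ x, f x = ∫⁻ y : EuclideanSpace ℝ (Fin k), ∫⁻ z : ℝ, f (snocPt y z) := by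
  rw [← (measurePreserving_snocEquiv k).lintegral_comp hf]
  simp only [snocEquiv_apply]
  exact lintegral_prod _ (hf.comp continuous_snocPt.measurable).aemeasurable

lemma integrable_prod_snocPt {k : ℕ} {f : EuclideanSpace ℝ (Fin (k + 1)) → ℂ}
    (hf : Integrable f) :
    Integrable (fun p : EuclideanSpace ℝ (Fin k) × ℝ => f (snocPt p.1 p.2))
      (volume.prod volume) := by
  have := (measurePreserving_snocEquiv k).integrable_comp_of_integrable hf
  simpa only [Function.comp_def, snocEquiv_apply] using this

lemma integral_snocPt {k : ℕ} {f : EuclideanSpace ℝ (Fin (k + 1)) → ℂ} (hf : Integrable f) :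
    ∫ x, f x = ∫ y : EuclideanSpace ℝ (Fin k), ∫ z : ℝ, f (snocPt y z) := by
  rw [← (measurePreserving_snocEquiv k).integral_comp' f]
  simp only [snocEquiv_apply]
  exact integral_prod _ (integrable_prod_snocPt hf)

/-! ### Fourier transform of the restriction to a hyperplane -/

lemma FT_eq_fourier (k : ℕ) (u : EuclideanSpace ℝ (Fin k) → ℂ) : FT k u = 𝓕 u := by
  ext ξ
  rw [Real.fourier_eq', FT]
  refine integral_congr_ae (Eventually.of_forall fun x => ?_)
  simp only [smul_eq_mul, PiLp.inner_apply, RCLike.inner_apply, conj_trivial]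
  rw [mul_comm Complex.I]
  simp only [mul_comm (x _)]

/-- Decay of a Schwartz function in terms of any lower bound `t` for `‖x‖`, such as the norm of
one component of `x`; this provides the dominating functions on slices. -/
lemma schwartz_bound {V : Type*} [NormedAddCommGroup V] [NormedSpace ℝ V]
    (f : SchwartzMap V ℂ) (N : ℕ) :
    ∃ C : ℝ, ∀ (x : V) (t : ℝ), 0 ≤ t → t ≤ ‖x‖ → ‖f x‖ ≤ C * (1 + t) ^ (-(N : ℝ)) := by
  refine ⟨2 ^ (N, 0).1 * (Finset.Iic (N, 0)).sup
    (fun m => SchwartzMap.seminorm ℝ m.1 m.2) f, fun x t ht htx => ?_⟩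
  have h := SchwartzMap.one_add_le_sup_seminorm_apply (𝕜 := ℝ) (m := (N, 0)) (k := N) (n := 0)
    le_rfl le_rfl f x
  rw [norm_iteratedFDeriv_zero] at h
  have h1 : (1 + t) ^ N * ‖f x‖ ≤ (1 + ‖x‖) ^ N * ‖f x‖ := by gcongr
  rw [Real.rpow_neg (by positivity), Real.rpow_natCast, ← div_eq_mul_inv,
    le_div_iff₀ (by positivity), mul_comm]
  exact h1.trans h

lemma integrable_schwartz_snocPt_left {k : ℕ}
    (f : SchwartzMap (EuclideanSpace ℝ (Fin (k + 1))) ℂ) (z : ℝ) :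
    Integrable fun y : EuclideanSpace ℝ (Fin k) => f (snocPt y z) := by
  obtain ⟨C, hC⟩ := schwartz_bound f (k + 1)
  have hi : Integrable fun y : EuclideanSpace ℝ (Fin k) =>
      C * (1 + ‖y‖) ^ (-((k + 1 : ℕ) : ℝ)) :=
    (integrable_one_add_norm (by simp)).const_mul C
  refine hi.mono' ?_ (Eventually.of_forall fun y =>
    hC _ _ (norm_nonneg _) (norm_le_norm_snocPt_left y z))
  exact (f.continuous.comp (continuous_snocPt.comp
    (continuous_id.prodMk continuous_const))).aestronglyMeasurable

lemma continuous_integral_schwartz_snocPt {k : ℕ}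
    (f : SchwartzMap (EuclideanSpace ℝ (Fin (k + 1))) ℂ) :
    Continuous fun y : EuclideanSpace ℝ (Fin k) => ∫ z : ℝ, f (snocPt y z) := by
  obtain ⟨C, hC⟩ := schwartz_bound f 2
  have hi : Integrable fun z : ℝ => C * (1 + ‖z‖) ^ (-((2 : ℕ) : ℝ)) :=
    (integrable_one_add_norm (by simp)).const_mul C
  refine MeasureTheory.continuous_of_dominated (fun y => ?_) (fun y => Eventually.of_forall
    fun z => hC _ _ (norm_nonneg _) (norm_le_norm_snocPt_right y z)) hi
    (Eventually.of_forall fun z => ?_)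
  · exact (f.continuous.comp (continuous_snocPt.comp
      (continuous_const.prodMk continuous_id))).aestronglyMeasurable
  · exact f.continuous.comp (continuous_snocPt.comp (continuous_id.prodMk continuous_const))

/-- The Fourier transform of the restriction of a Schwartz function to the hyperplane where the
last coordinate vanishes is the integral of its Fourier transform over the last frequency: by
inversion and Fubini the restriction is the inverse Fourier transform of that integral. -/
lemma fourier_restrict {k : ℕ} (f : SchwartzMap (EuclideanSpace ℝ (Fin (k + 1))) ℂ) :
    𝓕 (fun y : EuclideanSpace ℝ (Fin k) => f (snocPt y 0)) =
      fun η => ∫ ζ : ℝ, 𝓕 (⇑f) (snocPt η ζ) := by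
  obtain ⟨g, hg, hgf⟩ : ∃ g : SchwartzMap (EuclideanSpace ℝ (Fin (k + 1))) ℂ,
      ⇑g = 𝓕 (⇑f) ∧ 𝓕⁻ (⇑g) = ⇑f := by
    refine ⟨𝓕 f, SchwartzMap.fourier_coe f, ?_⟩
    rw [← SchwartzMap.fourierInv_coe, FourierTransform.fourierInv_fourier_eq]
  rw [← hg]
  set H : EuclideanSpace ℝ (Fin k) → ℂ := fun η => ∫ ζ : ℝ, g (snocPt η ζ) with hH
  have hHc : Continuous H := continuous_integral_schwartz_snocPt g
  have hHi : Integrable H := (integrable_prod_snocPt g.integrable).integral_prod_left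
  have hinv : 𝓕⁻ H = fun y : EuclideanSpace ℝ (Fin k) => f (snocPt y 0) := by
    ext y
    rw [← hgf, Real.fourierInv_eq', Real.fourierInv_eq', integral_snocPt]
    · refine integral_congr_ae (Eventually.of_forall fun η => ?_)
      simp only [hH, inner_snocPt, mul_zero, add_zero, smul_eq_mul]
      rw [integral_const_mul]
    · refine (g.integrable (μ := volume)).norm.mono' ?_ (Eventually.of_forall fun w => ?_)
      · exact Continuous.aestronglyMeasurable (by fun_prop)
      · rw [norm_smul, Complex.norm_exp_ofReal_mul_I, one_mul]
  have hFH : Integrable (𝓕 H) := by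
    have h2 : 𝓕 H = fun y => (fun y => f (snocPt y 0)) (-y) := by
      ext y
      rw [← hinv, Real.fourierInv_eq_fourier_neg, neg_neg]
    rw [h2]
    exact (integrable_schwartz_snocPt_left f 0).comp_neg
  rw [← hinv]
  exact hHc.fourier_fourierInv_eq hHi hFH

lemma fourier_iteratedLineDeriv {k : ℕ} (φ : SchwartzMap (EuclideanSpace ℝ (Fin k)) ℂ)
    (v : EuclideanSpace ℝ (Fin k)) (j : ℕ) (w : EuclideanSpace ℝ (Fin k)) :
    𝓕 (⇑(∂^{fun _ : Fin j => v} φ)) w =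
      (2 * Real.pi * Complex.I * (inner ℝ w v : ℝ)) ^ j * 𝓕 (⇑φ) w := by
  induction j with
  | zero => simp
  | succ j ih =>
    have hv : (fun x : EuclideanSpace ℝ (Fin k) => (inner ℝ x v : ℝ)).HasTemperateGrowth :=
      ((innerSL ℝ).flip v).hasTemperateGrowth
    rw [LineDeriv.iteratedLineDerivOp_succ_left, ← SchwartzMap.fourier_coe,
      SchwartzMap.fourier_lineDerivOp_eq]
    simp only [_root_.smul_apply, SchwartzMap.smulLeftCLM_apply_apply hv,
      SchwartzMap.fourier_coe, Fin.tail_def, ih, smul_eq_mul, Complex.real_smul, pow_succ]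
    ring

/-- The Fourier transform of the trace of the `j`-th normal derivative. -/
lemma fourier_trace {k : ℕ} (φ : SchwartzMap (EuclideanSpace ℝ (Fin (k + 1))) ℂ) (j : ℕ)
    (η : EuclideanSpace ℝ (Fin k)) :
    𝓕 (fun y : EuclideanSpace ℝ (Fin k) => iteratedFDeriv ℝ j (⇑φ) (snocPt y 0)
      (fun _ => EuclideanSpace.single (Fin.last k) 1)) η =
      ∫ ζ : ℝ, (2 * Real.pi * Complex.I * ζ) ^ j * 𝓕 (⇑φ) (snocPt η ζ) := by
  simp_rw [← SchwartzMap.iteratedLineDerivOp_eq_iteratedFDeriv]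
  rw [fourier_restrict]
  refine integral_congr_ae (Eventually.of_forall fun ζ => ?_)
  dsimp only
  rw [fourier_iteratedLineDeriv, EuclideanSpace.inner_single_right]
  simp

/-! ### The one-dimensional weight integral and Cauchy–Schwarz -/

lemma lintegral_mul_sq_le {f g : ℝ → ℝ≥0∞} (hf : Measurable f) (hg : Measurable g) :
    (∫⁻ z, f z * g z) ^ 2 ≤ (∫⁻ z, f z ^ 2) * ∫⁻ z, g z ^ 2 := by
  have h := ENNReal.lintegral_mul_le_Lp_mul_Lq volume Real.HolderConjugate.two_two
    hf.aemeasurable hg.aemeasurable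
  simp only [Pi.mul_apply, ENNReal.rpow_two] at h
  calc (∫⁻ z, f z * g z) ^ 2
      ≤ ((∫⁻ z, f z ^ 2) ^ (1 / 2 : ℝ) * (∫⁻ z, g z ^ 2) ^ (1 / 2 : ℝ)) ^ 2 := by gcongr
    _ = _ := by
      rw [mul_pow, ← ENNReal.rpow_natCast, ← ENNReal.rpow_natCast, ← ENNReal.rpow_mul,
        ← ENNReal.rpow_mul]
      norm_num

/-- Convergence at infinity uses `2r - 2j > 1`: the integrand is dominated by a multiple of
`(1+|w|)^{-(2r-2j)}`. -/
lemma integrable_weight {r : ℝ} {j : ℕ} (hj : (j : ℝ) < r - 1 / 2) :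
    Integrable fun w : ℝ => |w| ^ (2 * j) / (1 + |w| ^ (2 * r)) := by
  have hj0 : (0 : ℝ) ≤ j := Nat.cast_nonneg j
  have hi : Integrable fun w : ℝ => 2 ^ (2 * r) * (1 + ‖w‖) ^ (-(2 * r - 2 * j)) :=
    (integrable_one_add_norm (by rw [Module.finrank_self]; push_cast; linarith)).const_mul _
  refine hi.mono' (Measurable.aestronglyMeasurable (by fun_prop)) (Eventually.of_forall fun w => ?_)
  have hw : 0 ≤ |w| := abs_nonneg w
  have h1 : 0 < 1 + |w| := by positivity
  rw [Real.norm_of_nonneg (by positivity), Real.norm_eq_abs, div_le_iff₀ (by positivity),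
    neg_sub, Real.rpow_sub h1]
  have h2 : (1 + |w|) ^ (2 * r) ≤ 2 ^ (2 * r) * (1 + |w| ^ (2 * r)) := by
    rcases le_total |w| 1 with h | h
    · calc (1 + |w|) ^ (2 * r) ≤ 2 ^ (2 * r) :=
            Real.rpow_le_rpow h1.le (by linarith) (by linarith)
        _ ≤ _ := le_mul_of_one_le_right (by positivity)
            (by linarith [Real.rpow_nonneg hw (2 * r)])
    · calc (1 + |w|) ^ (2 * r) ≤ (2 * |w|) ^ (2 * r) :=
            Real.rpow_le_rpow h1.le (by linarith) (by linarith)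
        _ = 2 ^ (2 * r) * |w| ^ (2 * r) := Real.mul_rpow (by norm_num) hw
        _ ≤ _ := by gcongr; linarith
  have h3 : |w| ^ (2 * j) ≤ (1 + |w|) ^ (2 * (j : ℝ)) := by
    rw [show 2 * (j : ℝ) = ((2 * j : ℕ) : ℝ) by push_cast; ring, Real.rpow_natCast]
    gcongr
    linarith
  have h4 : 0 < (1 + |w|) ^ (2 * r) := Real.rpow_pos_of_pos h1 _
  calc |w| ^ (2 * j) ≤ (1 + |w|) ^ (2 * (j : ℝ)) * 1 := by rwa [mul_one]
    _ ≤ (1 + |w|) ^ (2 * (j : ℝ)) *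
        (2 ^ (2 * r) * (1 + |w| ^ (2 * r)) / (1 + |w|) ^ (2 * r)) := by
      gcongr
      rwa [one_le_div h4]
    _ = _ := by ring

/-- The scaling identity behind the trace exponents, obtained by substituting
`ζ = A^{1/(2r)} w`. -/
lemma lintegral_weight {r : ℝ} {j : ℕ} (hj : (j : ℝ) < r - 1 / 2) {A : ℝ} (hA : 0 < A) :
    ∫⁻ z : ℝ, ENNReal.ofReal (|z| ^ (2 * j) / (A + |z| ^ (2 * r))) =
      ENNReal.ofReal (A ^ (-(1 - j / r - 1 / (2 * r))) *
        ∫ w : ℝ, |w| ^ (2 * j) / (1 + |w| ^ (2 * r))) := by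
  have hj0 : (0 : ℝ) ≤ j := Nat.cast_nonneg j
  have hr : 0 < r := by linarith
  set a : ℝ := A ^ (1 / (2 * r)) with ha
  have ha0 : 0 < a := Real.rpow_pos_of_pos hA _
  have haA : a ^ (2 * r) = A := by
    rw [ha, ← Real.rpow_mul hA.le, one_div_mul_cancel (by positivity), Real.rpow_one]
  have hpt : ∀ z : ℝ, |z| ^ (2 * j) / (A + |z| ^ (2 * r)) =
      a ^ (2 * j) / A * (|z / a| ^ (2 * j) / (1 + |z / a| ^ (2 * r))) := by
    intro z
    have hz : 0 ≤ |z| ^ (2 * r) := by positivity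
    rw [abs_div, abs_of_pos ha0, Real.div_rpow (abs_nonneg z) ha0.le, haA, div_pow]
    field_simp
  have hint : Integrable fun z : ℝ =>
      a ^ (2 * j) / A * (|z / a| ^ (2 * j) / (1 + |z / a| ^ (2 * r))) :=
    ((integrable_weight hj).comp_div ha0.ne').const_mul _
  simp_rw [hpt]
  rw [← ofReal_integral_eq_lintegral_ofReal hint
    (Eventually.of_forall fun z => by positivity), integral_const_mul,
    Measure.integral_comp_div (fun w : ℝ => |w| ^ (2 * j) / (1 + |w| ^ (2 * r))), smul_eq_mul,
    abs_of_pos ha0, ← mul_assoc]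
  congr 2
  have h1 : a ^ (2 * j) = A ^ ((j : ℝ) / r) := by
    rw [← Real.rpow_natCast, ha, ← Real.rpow_mul hA.le]
    congr 1
    push_cast
    field_simp
  rw [h1, show -(1 - (j : ℝ) / r - 1 / (2 * r)) = j / r + 1 / (2 * r) - 1 by ring,
    Real.rpow_sub hA, Real.rpow_add hA, Real.rpow_one]
  ring

/-- The estimate on a single fibre `η = const`, with `p = (1+τ²)^s` and `q = 1+|ξ'|²`. -/
lemma fibre_estimate {r : ℝ} {j : ℕ} (hj : (j : ℝ) < r - 1 / 2) {p q : ℝ} (hp : 0 < p)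
    (hq : 0 < q) {F : ℝ → ℂ} (hF : Continuous F) :
    ENNReal.ofReal (p ^ (1 - j / r - 1 / (2 * r)) + q ^ (r - j - 1 / 2)) *
        ‖∫ ζ : ℝ, (2 * Real.pi * Complex.I * ζ) ^ j * F ζ‖ₑ ^ 2 ≤
      ENNReal.ofReal (4 * (2 * Real.pi) ^ (2 * j) *
        ∫ w : ℝ, |w| ^ (2 * j) / (1 + |w| ^ (2 * r))) *
      ∫⁻ ζ : ℝ, ENNReal.ofReal (p + (q + ζ ^ 2) ^ r) * ‖F ζ‖ₑ ^ 2 := by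
  have hj0 : (0 : ℝ) ≤ j := Nat.cast_nonneg j
  have hr : 0 < r := by linarith
  set θ : ℝ := 1 - j / r - 1 / (2 * r) with hθ
  have hθr : θ * r = r - j - 1 / 2 := by rw [hθ]; field_simp
  have hθ0 : 0 ≤ θ := by
    by_contra h
    nlinarith
  set K : ℝ := ∫ w : ℝ, |w| ^ (2 * j) / (1 + |w| ^ (2 * r)) with hK
  have hK0 : 0 ≤ K := integral_nonneg fun w => by positivity
  set A : ℝ := p + q ^ r with hA
  have hqr : 0 < q ^ r := Real.rpow_pos_of_pos hq r
  have hA0 : 0 < A := by positivity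
  have hW0 : ∀ ζ : ℝ, 0 < p + (q + ζ ^ 2) ^ r := fun ζ => by positivity
  -- The weight on the left is at most `2 A^θ`, and the one on the right at least
  -- `(A + |ζ|^{2r}) / 2`.
  have hw : p ^ θ + q ^ (r - j - 1 / 2) ≤ 2 * A ^ θ := by
    have h1 : p ^ θ ≤ A ^ θ := Real.rpow_le_rpow hp.le (by linarith) hθ0
    have h2 : q ^ (r - j - 1 / 2) ≤ A ^ θ := by
      rw [← hθr, mul_comm, Real.rpow_mul hq.le]
      exact Real.rpow_le_rpow hqr.le (by linarith) hθ0
    linarith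
  have hW : ∀ ζ : ℝ, A + |ζ| ^ (2 * r) ≤ 2 * (p + (q + ζ ^ 2) ^ r) := by
    intro ζ
    have h1 : q ^ r ≤ (q + ζ ^ 2) ^ r :=
      Real.rpow_le_rpow hq.le (by nlinarith [sq_nonneg ζ]) hr.le
    have h2 : |ζ| ^ (2 * r) ≤ (q + ζ ^ 2) ^ r := by
      rw [Real.rpow_mul (abs_nonneg ζ), Real.rpow_two, sq_abs]
      exact Real.rpow_le_rpow (sq_nonneg ζ) (by linarith) hr.le
    linarith
  -- Cauchy–Schwarz for the splitting `|2πζ|^j |F| = (|2πζ|^j W^{-1/2}) (W^{1/2} |F|)`.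
  set f : ℝ → ℝ≥0∞ := fun ζ =>
    ENNReal.ofReal (|2 * Real.pi * ζ| ^ j / √(p + (q + ζ ^ 2) ^ r)) with hf
  set g : ℝ → ℝ≥0∞ := fun ζ => ENNReal.ofReal (√(p + (q + ζ ^ 2) ^ r)) * ‖F ζ‖ₑ with hg
  have hfm : Measurable f := by rw [hf]; fun_prop
  have hgm : Measurable g := by
    have := hF.measurable
    rw [hg]; fun_prop
  have hfg : ‖∫ ζ : ℝ, (2 * Real.pi * Complex.I * ζ) ^ j * F ζ‖ₑ ≤ ∫⁻ ζ, f ζ * g ζ := by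
    refine (enorm_integral_le_lintegral_enorm _).trans_eq (lintegral_congr fun ζ => ?_)
    rw [hf, hg]
    simp only
    rw [← mul_assoc, ← ENNReal.ofReal_mul (by positivity),
      div_mul_cancel₀ _ (Real.sqrt_pos.2 (hW0 ζ)).ne', enorm_mul]
    congr 1
    rw [← ofReal_norm]
    simp [abs_mul]
  have hf2 : ∫⁻ ζ, f ζ ^ 2 ≤ ENNReal.ofReal (2 * (2 * Real.pi) ^ (2 * j) * (A ^ (-θ) * K)) := by
    rw [ENNReal.ofReal_mul (by positivity), ← lintegral_weight hj hA0,
      ← lintegral_const_mul _ (by fun_prop)]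
    refine lintegral_mono fun ζ => ?_
    rw [hf]
    simp only
    rw [← ENNReal.ofReal_pow (by positivity), ← ENNReal.ofReal_mul (by positivity)]
    refine ENNReal.ofReal_le_ofReal ?_
    rw [div_pow, Real.sq_sqrt (hW0 ζ).le, ← pow_mul, mul_comm j 2, abs_mul, mul_pow,
      abs_of_pos Real.two_pi_pos, div_le_iff₀ (hW0 ζ)]
    have h0 : 0 < A + |ζ| ^ (2 * r) := by positivity
    have hX : 0 ≤ (2 * Real.pi) ^ (2 * j) * |ζ| ^ (2 * j) := by positivity
    calc (2 * Real.pi) ^ (2 * j) * |ζ| ^ (2 * j)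
        = (2 * Real.pi) ^ (2 * j) * |ζ| ^ (2 * j) / (A + |ζ| ^ (2 * r)) *
          (A + |ζ| ^ (2 * r)) := by field_simp
      _ ≤ (2 * Real.pi) ^ (2 * j) * |ζ| ^ (2 * j) / (A + |ζ| ^ (2 * r)) *
          (2 * (p + (q + ζ ^ 2) ^ r)) := by
        gcongr
        exact hW ζ
      _ = _ := by ring
  have hg2 : ∫⁻ ζ, g ζ ^ 2 = ∫⁻ ζ : ℝ, ENNReal.ofReal (p + (q + ζ ^ 2) ^ r) * ‖F ζ‖ₑ ^ 2 := by
    refine lintegral_congr fun ζ => ?_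
    rw [hg]
    simp only
    rw [mul_pow, ← ENNReal.ofReal_pow (by positivity), Real.sq_sqrt (hW0 ζ).le]
  calc ENNReal.ofReal (p ^ θ + q ^ (r - j - 1 / 2)) *
        ‖∫ ζ : ℝ, (2 * Real.pi * Complex.I * ζ) ^ j * F ζ‖ₑ ^ 2
      ≤ ENNReal.ofReal (2 * A ^ θ) * ((∫⁻ ζ, f ζ ^ 2) * ∫⁻ ζ, g ζ ^ 2) := by
        gcongr
        exact (pow_le_pow_left' hfg 2).trans (lintegral_mul_sq_le hfm hgm)
    _ ≤ ENNReal.ofReal (2 * A ^ θ) *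
        (ENNReal.ofReal (2 * (2 * Real.pi) ^ (2 * j) * (A ^ (-θ) * K)) * ∫⁻ ζ, g ζ ^ 2) := by
        gcongr
    _ = _ := by
      rw [← mul_assoc, ← ENNReal.ofReal_mul (by positivity), hg2]
      congr 2
      rw [Real.rpow_neg hA0.le]
      have : 0 < A ^ θ := Real.rpow_pos_of_pos hA0 θ
      field_simp
      ring

end LateralTrace

/-- **Parabolic trace theorem, lateral trace.**
For `r > 1/2`, `s ≥ 0` and any integer `j` with `0 ≤ j < r − 1/2`, the map
`φ(t,x',x_m) ↦ (∂^j φ/∂x_m^j)(t,x',0)` extends by density to a bounded linear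
operator `H^{r,s}(ℝ_t × ℝ^m_x) → H^{μ_j,ν_j}(ℝ_t × ℝ^{m-1})`, where
`μ_j = r − j − 1/2` and `ν_j = s(1 − j/r − 1/(2r))`.  Boundedness is expressed on the
dense subspace of Schwartz functions (here the spatial dimension is `m = n + 1`). -/
theorem parabolic_trace_theorem_lateral
    (n : ℕ) (r s : ℝ) (hr : 1 / 2 < r) (hs : 0 ≤ s)
    (j : ℕ) (hj : (j : ℝ) < r - 1 / 2) :
    ∃ C : ℝ, 0 < C ∧
      ∀ φ : SchwartzMap (EuclideanSpace ℝ (Fin (n + 2))) ℂ,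
        (HrsSq n (r - j - 1 / 2) (s * (1 - j / r - 1 / (2 * r)))
            (fun y => iteratedFDeriv ℝ j (⇑φ) (hyperplaneEmbed n y)
              (fun _ => EuclideanSpace.single (Fin.last (n + 1)) 1))) ^ (1/2 : ℝ)
          ≤ ENNReal.ofReal C * (HrsSq (n + 1) r s ⇑φ) ^ (1/2 : ℝ) := by
  set K : ℝ := ∫ w : ℝ, |w| ^ (2 * j) / (1 + |w| ^ (2 * r)) with hK
  have hK0 : 0 ≤ K := integral_nonneg fun w => by positivity
  set C₀ : ℝ := 4 * (2 * Real.pi) ^ (2 * j) * K with hC₀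
  have hC₀0 : 0 ≤ C₀ := by positivity
  -- Adding `1` makes the constant positive without having to show `0 < K`.
  refine ⟨(C₀ + 1) ^ (1 / 2 : ℝ), by positivity, fun φ => ?_⟩
  rw [← ENNReal.ofReal_rpow_of_nonneg (by positivity) (by norm_num),
    ← ENNReal.mul_rpow_of_nonneg _ _ (by norm_num)]
  refine ENNReal.rpow_le_rpow ?_ (by norm_num)
  have hφ : Continuous (FourierTransform.fourier (⇑φ)) := by
    rw [← SchwartzMap.fourier_coe]
    exact SchwartzMap.continuous _
  have hbound : ∀ η : EuclideanSpace ℝ (Fin (n + 1)), _ := fun η =>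
    fibre_estimate hj (p := (1 + (η 0) ^ 2) ^ s) (q := 1 + ∑ i : Fin n, (η i.succ) ^ 2)
      (by positivity) (by positivity)
      (F := fun ζ => FourierTransform.fourier (⇑φ) (snocPt η ζ))
      (hφ.comp (continuous_snocPt.comp (continuous_const.prodMk continuous_id)))
  simp only [HrsSq, FT_eq_fourier, hyperplaneEmbed_eq, fourier_trace, ← enorm_eq_nnnorm]
  rw [lintegral_snocPt (k := n + 1) (by have := hφ.measurable; fun_prop)]
  calc _ ≤ ∫⁻ η : EuclideanSpace ℝ (Fin (n + 1)), ENNReal.ofReal C₀ * ∫⁻ ζ : ℝ,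
        ENNReal.ofReal ((1 + (η 0) ^ 2) ^ s + (1 + ∑ i : Fin n, (η i.succ) ^ 2 + ζ ^ 2) ^ r) *
          ‖FourierTransform.fourier (⇑φ) (snocPt η ζ)‖ₑ ^ 2 := by
        refine lintegral_mono fun η => ?_
        rw [Real.rpow_mul (by positivity)]
        exact hbound η
    _ = ENNReal.ofReal C₀ * ∫⁻ η : EuclideanSpace ℝ (Fin (n + 1)), ∫⁻ ζ : ℝ,
        ENNReal.ofReal ((1 + (η 0) ^ 2) ^ s + (1 + ∑ i : Fin n, (η i.succ) ^ 2 + ζ ^ 2) ^ r) *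
          ‖FourierTransform.fourier (⇑φ) (snocPt η ζ)‖ₑ ^ 2 :=
        lintegral_const_mul' _ _ ENNReal.ofReal_ne_top
    _ ≤ _ := by
        refine mul_le_mul' (ENNReal.ofReal_le_ofReal (by linarith))
          (lintegral_mono fun η => lintegral_mono fun ζ => le_of_eq ?_)
        have h0 : snocPt η ζ 0 = η 0 := snocPt_castSucc η ζ 0
        have h1 : ∀ i : Fin n, snocPt η ζ i.castSucc.succ = η i.succ :=
          fun i => snocPt_castSucc η ζ i.succ
        have h2 : snocPt η ζ (Fin.last n).succ = ζ := snocPt_last η ζ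
        simp only [h0, Fin.sum_univ_castSucc, h1, h2, add_assoc]

end
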